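/- arXiv:2103.15387 — 2 statements merged into one kernel-verified Lean document; each statement's English description precedes it below -/
import Mathlib

section
/- Let n ≥ 1 and a, b, c > 1. Set A = diag(a⁻¹, 1, …, 1), B = diag(b⁻¹, 1, …, 1), F = diag(abc, 1, …, 1) (diagonal n×n matrices). Then equality holds in the perturbation inequality for the distance to SO(n): dist(F, SO(n)) = (1 + |A⁻¹ − Id|)(1 + |B⁻¹ − Id|)·dist(A F B, SO(n)) + |A⁻¹ − Id| + |B⁻¹ − Id| + |A⁻¹ − Id|·|B⁻¹ − Id|; in fact both sides equal abc − 1. -/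
/-!
For a positive semidefinite `F` the nearest rotation is the identity: every orthogonal `Q` satisfies
`|F - Q|² = |F - 1|² + tr ((1 - Q) F (1 - Q)ᵀ)`, and the last trace is nonnegative. Hence `t - 1` is
the distance from `diag(t, 1, …, 1)` to `SO(n)` for `t ≥ 1`. As `A F B = diag(c, 1, …, 1)`, the
equality reads `abc - 1 = ab (c - 1) + (ab - 1)`.
-/

open Matrix

/-- The Frobenius norm of a real square matrix, `|F|² = tr(Fᵀ F)`. -/
noncomputable def frob {n : ℕ} (F : Matrix (Fin n) (Fin n) ℝ) : ℝ :=
  Real.sqrt ((Fᵀ * F).trace)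

/-- The special orthogonal group `SO(n)` as a set of matrices. -/
def SOn (n : ℕ) : Set (Matrix (Fin n) (Fin n) ℝ) :=
  {Q | Qᵀ * Q = 1 ∧ Q.det = 1}

/-- The Frobenius distance of a matrix to `SO(n)`. -/
noncomputable def distSO {n : ℕ} (F : Matrix (Fin n) (Fin n) ℝ) : ℝ :=
  sInf ((fun Q => frob (F - Q)) '' SOn n)

section OrthogonalPerturbation

variable {ι R : Type*} [Fintype ι] [DecidableEq ι] [CommRing R]

lemma trace_transpose_sub_mul_sub_of_orthogonal {F Q : Matrix ι ι R}
    (hF : F.IsSymm) (hQ : Qᵀ * Q = 1) :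
    ((F - Q)ᵀ * (F - Q)).trace =
      ((F - 1)ᵀ * (F - 1)).trace + ((1 - Q) * F * (1 - Q)ᵀ).trace := by
  have h_conj : (Q * F * Qᵀ).trace = F.trace := by
    rw [trace_mul_comm, ← Matrix.mul_assoc, hQ, Matrix.one_mul]
  have h_left : (Qᵀ * F).trace = (Q * F).trace := by
    rw [← trace_transpose, transpose_mul, transpose_transpose, hF.eq, trace_mul_comm]
  have h_right : (F * Qᵀ).trace = (Q * F).trace := by
    rw [trace_mul_comm, h_left]
  simp only [transpose_sub, transpose_one, hF.eq, Matrix.sub_mul, Matrix.mul_sub, Matrix.one_mul,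
    Matrix.mul_one, hQ, trace_sub, h_conj, h_left, h_right, trace_mul_comm F Q]
  ring

end OrthogonalPerturbation

section DistanceToRotations

variable {n : ℕ} {F : Matrix (Fin n) (Fin n) ℝ}

lemma frob_sub_one_le_frob_sub_of_orthogonal {Q : Matrix (Fin n) (Fin n) ℝ}
    (hF : F.PosSemidef) (hQ : Qᵀ * Q = 1) : frob (F - 1) ≤ frob (F - Q) := by
  refine Real.sqrt_le_sqrt ?_
  have hF_symm : F.IsSymm := hF.isHermitian
  rw [trace_transpose_sub_mul_sub_of_orthogonal hF_symm hQ]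
  exact le_add_of_nonneg_right (hF.mul_mul_conjTranspose_same (1 - Q)).trace_nonneg

lemma one_mem_SOn : (1 : Matrix (Fin n) (Fin n) ℝ) ∈ SOn n :=
  ⟨by rw [transpose_one, Matrix.one_mul], det_one⟩

lemma distSO_of_posSemidef (hF : F.PosSemidef) : distSO F = frob (F - 1) := by
  have h_least : IsLeast ((fun Q => frob (F - Q)) '' SOn n) (frob (F - 1)) := by
    refine ⟨Set.mem_image_of_mem _ one_mem_SOn, ?_⟩
    rintro _ ⟨Q, ⟨hQ, -⟩, rfl⟩
    exact frob_sub_one_le_frob_sub_of_orthogonal hF hQ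
  exact h_least.csInf_eq

end DistanceToRotations

section CoordinateStretching

variable {ι K : Type*} [DecidableEq ι]

lemma diagonal_mulSingle_sub_one [Ring K] (i : ι) (t : K) :
    diagonal (Pi.mulSingle i t) - 1 = single i i (t - 1) := by
  rw [← diagonal_one, diagonal_sub, ← diagonal_single]
  congr 1
  ext j
  obtain rfl | hj := eq_or_ne j i <;> simp [*]

lemma diagonal_mulSingle_mul [Fintype ι] [Semiring K] (i : ι) (s t : K) :
    diagonal (Pi.mulSingle i s) * diagonal (Pi.mulSingle i t) =
      diagonal (Pi.mulSingle i (s * t)) := by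
  rw [Pi.mulSingle_mul]
  exact diagonal_mul_diagonal _ _

lemma inv_diagonal_mulSingle_inv [Fintype ι] [Field K] (i : ι) {t : K} (ht : t ≠ 0) :
    (diagonal (Pi.mulSingle i t⁻¹))⁻¹ = diagonal (Pi.mulSingle i t) := by
  apply inv_eq_right_inv
  rw [diagonal_mulSingle_mul, inv_mul_cancel₀ ht, Pi.mulSingle_one, diagonal_one']

lemma posSemidef_diagonal_mulSingle (i : ι) {t : ℝ} (ht : 0 ≤ t) :
    (diagonal (Pi.mulSingle i t)).PosSemidef := by
  refine PosSemidef.diagonal fun j => ?_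
  obtain rfl | hj := eq_or_ne j i <;> simp [*]

variable {n : ℕ}

lemma frob_single (i j : Fin n) (t : ℝ) : frob (single i j t) = |t| := by
  rw [frob, transpose_single, single_mul_single_same, trace_single_eq_same,
    Real.sqrt_mul_self_eq_abs]

lemma frob_diagonal_mulSingle_sub_one (i : Fin n) {t : ℝ} (ht : 1 ≤ t) :
    frob (diagonal (Pi.mulSingle i t) - 1) = t - 1 := by
  rw [diagonal_mulSingle_sub_one, frob_single, abs_of_nonneg (sub_nonneg.2 ht)]

lemma distSO_diagonal_mulSingle (i : Fin n) {t : ℝ} (ht : 1 ≤ t) :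
    distSO (diagonal (Pi.mulSingle i t)) = t - 1 := by
  rw [distSO_of_posSemidef (posSemidef_diagonal_mulSingle i (zero_le_one.trans ht)),
    frob_diagonal_mulSingle_sub_one i ht]

lemma ite_val_eq_zero_eq_mulSingle (hn : 0 < n) {M : Type*} [One M] (t : M) :
    (fun i : Fin n => if (i : ℕ) = 0 then t else 1) = Pi.mulSingle ⟨0, hn⟩ t := by
  ext i
  simp only [Pi.mulSingle_apply, Fin.ext_iff]

end CoordinateStretching

theorem dist_SOn_perturbed_equality {n : ℕ} (hn : 1 ≤ n) (a b c : ℝ)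
    (ha : 1 < a) (hb : 1 < b) (hc : 1 < c)
    (A B F : Matrix (Fin n) (Fin n) ℝ)
    (hA : A = Matrix.diagonal (fun i : Fin n => if (i : ℕ) = 0 then a⁻¹ else 1))
    (hB : B = Matrix.diagonal (fun i : Fin n => if (i : ℕ) = 0 then b⁻¹ else 1))
    (hF : F = Matrix.diagonal (fun i : Fin n => if (i : ℕ) = 0 then a * b * c else 1)) :
    distSO F =
      (1 + frob (A⁻¹ - 1)) * (1 + frob (B⁻¹ - 1)) * distSO (A * F * B)
        + frob (A⁻¹ - 1) + frob (B⁻¹ - 1) + frob (A⁻¹ - 1) * frob (B⁻¹ - 1)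
    ∧ distSO F = a * b * c - 1 := by
  rw [ite_val_eq_zero_eq_mulSingle hn] at hA hB hF
  have ha₀ : a ≠ 0 := by positivity
  have hb₀ : b ≠ 0 := by positivity
  have habc : 1 ≤ a * b * c :=
    one_le_mul_of_one_le_of_one_le (one_le_mul_of_one_le_of_one_le ha.le hb.le) hc.le
  have h_cancel : a⁻¹ * (a * b * c) * b⁻¹ = c := by field_simp
  have hAFB : A * F * B = diagonal (Pi.mulSingle ⟨0, hn⟩ c) := by
    rw [hA, hF, hB, diagonal_mulSingle_mul, diagonal_mulSingle_mul, h_cancel]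
  have hA_norm : frob (A⁻¹ - 1) = a - 1 := by
    rw [hA, inv_diagonal_mulSingle_inv _ ha₀, frob_diagonal_mulSingle_sub_one _ ha.le]
  have hB_norm : frob (B⁻¹ - 1) = b - 1 := by
    rw [hB, inv_diagonal_mulSingle_inv _ hb₀, frob_diagonal_mulSingle_sub_one _ hb.le]
  have hF_dist : distSO F = a * b * c - 1 := by
    rw [hF, distSO_diagonal_mulSingle _ habc]
  refine ⟨?_, hF_dist⟩
  rw [hF_dist, hAFB, distSO_diagonal_mulSingle _ hc.le, hA_norm, hB_norm]
  ring
end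

section
/- For every n ≥ 1 there exist constants c > 0 and C > 0 such that for every real n×n matrix F with |F| ≤ c one has |dist(Id + F, SO(n)) − |sym F|| ≤ C·|F|². -/
open Matrix

/-- The symmetric part of a square matrix. -/
noncomputable def symPart {n : ℕ} (F : Matrix (Fin n) (Fin n) ℝ) : Matrix (Fin n) (Fin n) ℝ :=
  (2⁻¹ : ℝ) • (F + Fᵀ)

/-!
The manifold `SO(n)` is tangent at `1` to the skew-adjoint matrices, and the nearest such matrix to
`F` leaves the residual `sym F`; only second-order errors have to be controlled.

* If `Q` is unitary and `D = Q - 1`, then `sym D = -Dᵀ D / 2`, so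
  `|sym F| ≤ |F - D| + |D|² / 2`. When `|F - D| ≤ |F|`, `D` has norm at most `2 |F|`; otherwise
  `|F - D| ≥ |F| ≥ |sym F|` already.
* For the competitor, take the Cayley transform `Q` of half the skew part of `F`. Left
  multiplication by `1 - B` with `B` skew does not decrease the Frobenius norm, because
  `(1 - B)ᵀ (1 - B) = 1 + Bᵀ B`. Hence the remainder `R = Q - 1 - 2 B`, which solves
  `(1 - B) R = 2 B²`, satisfies `|R| ≤ 2 |B|²` however large `F` is.
-/

section NormedStarRing

section Parts

variable {E : Type*} [SeminormedAddCommGroup E] [StarAddMonoid E] [NormedStarGroup E]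
  [NormedSpace ℝ E] [StarModule ℝ E]

lemma norm_selfAdjointPart_le (x : E) : ‖(selfAdjointPart ℝ x : E)‖ ≤ ‖x‖ := by
  have htri : ‖x + star x‖ ≤ ‖x‖ + ‖x‖ := by simpa only [norm_star] using norm_add_le x (star x)
  rw [selfAdjointPart_apply_coe, invOf_eq_inv, norm_smul, norm_inv, Real.norm_ofNat]
  linarith

lemma norm_skewAdjointPart_le (x : E) : ‖(skewAdjointPart ℝ x : E)‖ ≤ ‖x‖ := by
  have htri : ‖x - star x‖ ≤ ‖x‖ + ‖x‖ := by simpa only [norm_star] using norm_sub_le x (star x)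
  rw [skewAdjointPart_apply_coe, invOf_eq_inv, norm_smul, norm_inv, Real.norm_ofNat]
  linarith

end Parts

lemma sub_one_add_star_sub_one_of_mem_unitary {R : Type*} [Ring R] [StarRing R] {u : R}
    (hu : u ∈ unitary R) : (u - 1) + star (u - 1) = -(star (u - 1) * (u - 1)) := by
  rw [star_sub, star_one, sub_mul, mul_sub, Unitary.star_mul_self_of_mem hu]
  noncomm_ring

variable {A : Type*} [NormedRing A] [StarRing A] [NormedStarGroup A] [NormedAlgebra ℝ A]
  [StarModule ℝ A]

lemma norm_selfAdjointPart_unitary_sub_one_le {u : A} (hu : u ∈ unitary A) :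
    ‖(selfAdjointPart ℝ (u - 1) : A)‖ ≤ ‖u - 1‖ ^ 2 / 2 := by
  have hmul : ‖star (u - 1) * (u - 1)‖ ≤ ‖u - 1‖ ^ 2 := by
    simpa only [norm_star, sq] using norm_mul_le (star (u - 1)) (u - 1)
  rw [selfAdjointPart_apply_coe, sub_one_add_star_sub_one_of_mem_unitary hu, invOf_eq_inv,
    norm_smul, norm_inv, Real.norm_ofNat, norm_neg]
  linarith

lemma norm_selfAdjointPart_le_norm_one_add_sub_add (x : A) {u : A} (hu : u ∈ unitary A) :
    ‖(selfAdjointPart ℝ x : A)‖ ≤ ‖1 + x - u‖ + ‖u - 1‖ ^ 2 / 2 := calc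
  ‖(selfAdjointPart ℝ x : A)‖
      = ‖(selfAdjointPart ℝ (1 + x - u) : A) + selfAdjointPart ℝ (u - 1)‖ := by
    rw [← AddSubgroup.coe_add, ← map_add]
    congr 3
    abel
  _ ≤ ‖(selfAdjointPart ℝ (1 + x - u) : A)‖ + ‖(selfAdjointPart ℝ (u - 1) : A)‖ :=
    norm_add_le _ _
  _ ≤ ‖1 + x - u‖ + ‖u - 1‖ ^ 2 / 2 :=
    add_le_add (norm_selfAdjointPart_le _) (norm_selfAdjointPart_unitary_sub_one_le hu)

lemma norm_selfAdjointPart_sub_le_norm_one_add_sub (x : A) {u : A} (hu : u ∈ unitary A) :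
    ‖(selfAdjointPart ℝ x : A)‖ - 2 * ‖x‖ ^ 2 ≤ ‖1 + x - u‖ := by
  have hx : ‖(selfAdjointPart ℝ x : A)‖ ≤ ‖x‖ := norm_selfAdjointPart_le x
  rcases le_total ‖x‖ ‖1 + x - u‖ with hfar | hnear
  · linarith [sq_nonneg ‖x‖]
  have hu_one : ‖u - 1‖ ≤ 2 * ‖x‖ := calc
    ‖u - 1‖ = ‖x - (1 + x - u)‖ := by congr 1; abel
    _ ≤ ‖x‖ + ‖1 + x - u‖ := norm_sub_le _ _
    _ ≤ 2 * ‖x‖ := by linarith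
  have hsplit := norm_selfAdjointPart_le_norm_one_add_sub_add x hu
  have hsq : ‖u - 1‖ ^ 2 ≤ (2 * ‖x‖) ^ 2 := pow_le_pow_left₀ (norm_nonneg _) hu_one 2
  linarith

end NormedStarRing

section Cayley

/-- The Cayley transform `(1 - b)⁻¹ (1 + b)`, which agrees with `exp (2 * b)` to second order in `b`
and maps skew-adjoint elements to unitary ones. It is only meaningful when `1 - b` is a unit:
otherwise `Ring.inverse` makes it `0`. -/
noncomputable def cayleyTransform {R : Type*} [Ring R] (b : R) : R :=
  Ring.inverse (1 - b) * (1 + b)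

lemma one_sub_mul_cayleyTransform {R : Type*} [Ring R] {b : R} (h : IsUnit (1 - b)) :
    (1 - b) * cayleyTransform b = 1 + b :=
  Ring.mul_inverse_cancel_left _ _ h

lemma one_sub_mul_cayleyTransform_sub {R : Type*} [Ring R] {b : R} (h : IsUnit (1 - b)) :
    (1 - b) * (cayleyTransform b - 1 - 2 * b) = 2 * (b * b) := by
  rw [mul_sub, mul_sub, one_sub_mul_cayleyTransform h]
  noncomm_ring

lemma star_one_sub_of_mem_skewAdjoint {R : Type*} [Ring R] [StarRing R] {b : R}
    (hb : b ∈ skewAdjoint R) : star (1 - b) = 1 + b := by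
  rw [star_sub, star_one, skewAdjoint.mem_iff.mp hb, sub_neg_eq_add]

lemma star_one_sub_mul_one_sub_of_mem_skewAdjoint {R : Type*} [Ring R] [StarRing R] {b : R}
    (hb : b ∈ skewAdjoint R) : star (1 - b) * (1 - b) = 1 + star b * b := by
  rw [star_one_sub_of_mem_skewAdjoint hb, skewAdjoint.mem_iff.mp hb]
  noncomm_ring

lemma inv_mul_star_mem_unitary {G : Type*} [Group G] [StarMul G] (g : G) [IsStarNormal g] :
    g⁻¹ * star g ∈ unitary G := by
  have hcomm : Commute (star g) g := star_comm_self
  have hstar_mul : star (g⁻¹ * star g) * (g⁻¹ * star g) = 1 := calc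
    _ = g * ((star g)⁻¹ * g⁻¹) * star g := by rw [star_mul, star_star, star_inv]; group
    _ = g * (g⁻¹ * (star g)⁻¹) * star g := by rw [hcomm.inv_inv.eq]
    _ = 1 := by group
  exact Unitary.mem_iff.mpr ⟨hstar_mul, mul_eq_one_comm.mp hstar_mul⟩

lemma inverse_mul_star_mem_unitary {R : Type*} [MonoidWithZero R] [StarMul R] {v : R}
    [IsStarNormal v] (hv : IsUnit v) : Ring.inverse v * star v ∈ unitary R := by
  obtain ⟨v, rfl⟩ := hv
  have : IsStarNormal v := ⟨Units.ext (star_comm_self' (v : R))⟩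
  have hmem := Unitary.mem_iff.mp (inv_mul_star_mem_unitary v)
  rw [Ring.inverse_unit, ← Units.coe_star, ← Units.val_mul]
  exact Unitary.mem_iff.mpr ⟨congrArg Units.val hmem.1, congrArg Units.val hmem.2⟩

lemma cayleyTransform_mem_unitary {R : Type*} [Ring R] [StarRing R] {b : R}
    (hb : b ∈ skewAdjoint R) (h : IsUnit (1 - b)) : cayleyTransform b ∈ unitary R := by
  have hnormal : IsStarNormal (1 - b) := ⟨by
    rw [star_one_sub_of_mem_skewAdjoint hb]
    exact (Commute.one_left _).add_left ((Commute.one_right b).sub_right (Commute.refl b))⟩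
  rw [cayleyTransform, ← star_one_sub_of_mem_skewAdjoint hb]
  exact inverse_mul_star_mem_unitary h

lemma cayleyTransform_mem_specialUnitaryGroup {n R : Type*} [Fintype n] [DecidableEq n] [CommRing R]
    [StarRing R] [TrivialStar R] {B : Matrix n n R} (hB : B ∈ skewAdjoint (Matrix n n R))
    (h : IsUnit (1 - B)) : cayleyTransform B ∈ specialUnitaryGroup n R := by
  refine mem_specialUnitaryGroup_iff.mpr ⟨cayleyTransform_mem_unitary hB h, ?_⟩
  calc (cayleyTransform B).det
      = (Ring.inverse (1 - B)).det * (star (1 - B)).det := by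
        rw [cayleyTransform, det_mul, star_one_sub_of_mem_skewAdjoint hB]
    _ = (Ring.inverse (1 - B)).det * (1 - B).det := by
        rw [star_eq_conjTranspose, det_conjTranspose, star_trivial]
    _ = 1 := by rw [← det_mul, Ring.inverse_mul_cancel _ h, det_one]

end Cayley

section Frobenius

open scoped Matrix.Norms.Frobenius

variable {m n 𝕜 : Type*} [Fintype m] [Fintype n] [RCLike 𝕜]

lemma frobenius_norm_sq_eq_re_trace (X : Matrix m n 𝕜) : ‖X‖ ^ 2 = RCLike.re (Xᴴ * X).trace := by
  rw [frobenius_norm_def, ← Real.sqrt_eq_rpow, Real.sq_sqrt (by positivity), Finset.sum_comm]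
  simp only [trace, diag_apply, mul_apply, conjTranspose_apply, map_sum, RCLike.star_def,
    RCLike.conj_mul, Real.rpow_two, ← RCLike.ofReal_pow, RCLike.ofReal_re]

variable [DecidableEq n]

open scoped ComplexOrder in
lemma isUnit_one_sub_of_mem_skewAdjoint {B : Matrix n n 𝕜}
    (hB : B ∈ skewAdjoint (Matrix n n 𝕜)) : IsUnit (1 - B) := by
  have hpos : (1 + Bᴴ * B).PosDef :=
    PosDef.one.add_posSemidef (posSemidef_conjTranspose_mul_self B)
  rw [← star_eq_conjTranspose, ← star_one_sub_mul_one_sub_of_mem_skewAdjoint hB] at hpos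
  exact isUnit_of_mul_isUnit_right hpos.isUnit

lemma norm_one_sub_mul_sq {B : Matrix n n 𝕜} (hB : B ∈ skewAdjoint (Matrix n n 𝕜))
    (X : Matrix n m 𝕜) : ‖(1 - B) * X‖ ^ 2 = ‖X‖ ^ 2 + ‖B * X‖ ^ 2 := by
  have hgram : ((1 - B) * X)ᴴ * ((1 - B) * X) = Xᴴ * X + (B * X)ᴴ * (B * X) := calc
    _ = Xᴴ * (star (1 - B) * (1 - B)) * X := by
      simp only [star_eq_conjTranspose, conjTranspose_mul, Matrix.mul_assoc]
    _ = Xᴴ * (1 + Bᴴ * B) * X := by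
      rw [star_one_sub_mul_one_sub_of_mem_skewAdjoint hB, star_eq_conjTranspose]
    _ = Xᴴ * X + (B * X)ᴴ * (B * X) := by
      simp only [conjTranspose_mul, Matrix.mul_add, Matrix.add_mul, Matrix.mul_one,
        Matrix.mul_assoc]
  simp only [frobenius_norm_sq_eq_re_trace, hgram, trace_add, map_add]

lemma norm_le_norm_one_sub_mul {B : Matrix n n 𝕜} (hB : B ∈ skewAdjoint (Matrix n n 𝕜))
    (X : Matrix n m 𝕜) : ‖X‖ ≤ ‖(1 - B) * X‖ :=
  le_of_sq_le_sq (by linarith [norm_one_sub_mul_sq hB X, sq_nonneg ‖B * X‖]) (norm_nonneg _)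

lemma norm_cayleyTransform_sub_le {B : Matrix n n 𝕜} (hB : B ∈ skewAdjoint (Matrix n n 𝕜)) :
    ‖cayleyTransform B - 1 - 2 * B‖ ≤ 2 * ‖B‖ ^ 2 := calc
  ‖cayleyTransform B - 1 - 2 * B‖ ≤ ‖(1 - B) * (cayleyTransform B - 1 - 2 * B)‖ :=
    norm_le_norm_one_sub_mul hB _
  _ = ‖B * B + B * B‖ := by
    rw [one_sub_mul_cayleyTransform_sub (isUnit_one_sub_of_mem_skewAdjoint hB), two_mul]
  _ ≤ ‖B * B‖ + ‖B * B‖ := norm_add_le _ _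
  _ ≤ 2 * ‖B‖ ^ 2 := by linarith [norm_mul_le B B]

lemma exists_skewAdjoint_norm_one_add_sub_cayleyTransform_le (F : Matrix n n 𝕜) :
    ∃ B ∈ skewAdjoint (Matrix n n 𝕜), ‖1 + F - cayleyTransform B‖ ≤
      ‖(selfAdjointPart ℝ F : Matrix n n 𝕜)‖ + ‖F‖ ^ 2 / 2 := by
  let S : Matrix n n 𝕜 := selfAdjointPart ℝ F
  let K : Matrix n n 𝕜 := skewAdjointPart ℝ F
  let B : Matrix n n 𝕜 := (2⁻¹ : ℝ) • K
  have hB : B ∈ skewAdjoint (Matrix n n 𝕜) := skewAdjoint.smul_mem _ (skewAdjointPart ℝ F).2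
  have hBK : 2 * B = K := by rw [two_mul, ← two_smul ℝ, smul_inv_smul₀ two_ne_zero]
  have hBF : ‖B‖ ≤ ‖F‖ / 2 := by
    rw [norm_smul, norm_inv, Real.norm_ofNat]
    linarith [norm_skewAdjointPart_le F]
  refine ⟨B, hB, ?_⟩
  calc ‖1 + F - cayleyTransform B‖ = ‖S - (cayleyTransform B - 1 - 2 * B)‖ := by
        rw [hBK, ← StarModule.selfAdjointPart_add_skewAdjointPart ℝ F]
        congr 1
        abel
    _ ≤ ‖S‖ + ‖cayleyTransform B - 1 - 2 * B‖ := norm_sub_le _ _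
    _ ≤ ‖S‖ + 2 * ‖B‖ ^ 2 := by gcongr; exact norm_cayleyTransform_sub_le hB
    _ ≤ ‖S‖ + 2 * (‖F‖ / 2) ^ 2 := by gcongr
    _ = ‖S‖ + ‖F‖ ^ 2 / 2 := by ring

lemma abs_infDist_specialOrthogonalGroup_sub_le (F : Matrix n n ℝ) :
    |Metric.infDist (1 + F) (specialOrthogonalGroup n ℝ) -
      ‖(selfAdjointPart ℝ F : Matrix n n ℝ)‖| ≤ 2 * ‖F‖ ^ 2 := by
  have hlower : ‖(selfAdjointPart ℝ F : Matrix n n ℝ)‖ - 2 * ‖F‖ ^ 2 ≤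
      Metric.infDist (1 + F) (specialOrthogonalGroup n ℝ) := by
    refine (Metric.le_infDist ⟨1, one_mem _⟩).mpr fun Q hQ => ?_
    rw [dist_eq_norm]
    exact norm_selfAdjointPart_sub_le_norm_one_add_sub F hQ.1
  obtain ⟨B, hB, hFB⟩ := exists_skewAdjoint_norm_one_add_sub_cayleyTransform_le F
  have hupper : Metric.infDist (1 + F) (specialOrthogonalGroup n ℝ) ≤
      ‖1 + F - cayleyTransform B‖ := by
    rw [← dist_eq_norm]
    exact Metric.infDist_le_dist_of_mem
      (cayleyTransform_mem_specialUnitaryGroup hB (isUnit_one_sub_of_mem_skewAdjoint hB))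
  exact abs_le.mpr ⟨by linarith, by linarith [sq_nonneg ‖F‖]⟩

lemma frob_eq_norm {n : ℕ} (F : Matrix (Fin n) (Fin n) ℝ) : frob F = ‖F‖ := by
  rw [← Real.sqrt_sq (norm_nonneg F), frobenius_norm_sq_eq_re_trace, frob,
    conjTranspose_eq_transpose_of_trivial, RCLike.re_to_real]

lemma SOn_eq_specialOrthogonalGroup (n : ℕ) : SOn n = specialOrthogonalGroup (Fin n) ℝ := by
  ext Q
  exact (and_congr_left' (mem_orthogonalGroup_iff' (Fin n) ℝ).symm).trans
    mem_specialOrthogonalGroup_iff.symm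

lemma distSO_eq_infDist {n : ℕ} (F : Matrix (Fin n) (Fin n) ℝ) :
    distSO F = Metric.infDist F (specialOrthogonalGroup (Fin n) ℝ) := by
  simp only [distSO, SOn_eq_specialOrthogonalGroup, frob_eq_norm, Metric.infDist_eq_iInf,
    sInf_image', dist_eq_norm, SetLike.coe_sort_coe]

lemma symPart_eq_selfAdjointPart {n : ℕ} (F : Matrix (Fin n) (Fin n) ℝ) :
    symPart F = selfAdjointPart ℝ F := by
  rw [symPart, selfAdjointPart_apply_coe, invOf_eq_inv, star_eq_conjTranspose,
    conjTranspose_eq_transpose_of_trivial]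

theorem dist_SOn_taylor_expansion_general {n : ℕ} (F : Matrix (Fin n) (Fin n) ℝ) :
    |distSO (1 + F) - frob (symPart F)| ≤ 2 * frob F ^ 2 := by
  rw [distSO_eq_infDist, symPart_eq_selfAdjointPart, frob_eq_norm, frob_eq_norm]
  exact abs_infDist_specialOrthogonalGroup_sub_le F

end Frobenius

theorem dist_SOn_taylor_expansion {n : ℕ} (hn : 1 ≤ n) :
    ∃ c > (0 : ℝ), ∃ C > (0 : ℝ), ∀ F : Matrix (Fin n) (Fin n) ℝ,
      frob F ≤ c → |distSO (1 + F) - frob (symPart F)| ≤ C * frob F ^ 2 :=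
  ⟨1, one_pos, 2, two_pos, fun F _ => dist_SOn_taylor_expansion_general F⟩
end
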